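/- arXiv:1601.05496 — 2 statements merged into one kernel-verified Lean document; each statement's English description precedes it below -/
import Mathlib

section
/- Let 0 < q < 1, 0 < 2α < n, and let σ be a radially symmetric nonnegative locally finite Borel measure on ℝⁿ. Suppose u is a radial nonnegative function, not identically zero or infinity, satisfying u ≥ I_{2α}(u^q dσ) and the dual bound (∫_{B(0,R)} |y|^{-(n-2α)q} dσ(y))^{1/(1-q)} ≤ C ∫_{B(0,R)} u^q dσ for all R > 0. Then for every x ≠ 0, u(x) ≥ c |x|^{-(n-2α)} (∫_{|y|<|x|} dσ(y)/|y|^{(n-2α)q})^{1/(1-q)}; in particular if u is finite somewhere then ∫_{|y|<1} dσ(y)/|y|^{(n-2α)q} < ∞ and ∫_{|y|≥1} dσ(y)/|y|^{n-2α} < ∞. -/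
open MeasureTheory Metric Set

/-- The Riesz potential `I_{2α}μ(x) = ∫_0^∞ μ(B(x,r))/r^{n-2α} dr/r`. -/
noncomputable def riesz2 {n : ℕ} (α : ℝ)
    (μ : Measure (EuclideanSpace ℝ (Fin n)))
    (x : EuclideanSpace ℝ (Fin n)) : ENNReal :=
  ∫⁻ r in Ioi (0:ℝ),
    μ (ball x r) / ENNReal.ofReal (r ^ ((n : ℝ) - 2 * α)) / ENNReal.ofReal r

noncomputable def kern (d r : ℝ) : ENNReal :=
  (ENNReal.ofReal (r ^ d))⁻¹ * (ENNReal.ofReal r)⁻¹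

lemma kern_meas (d : ℝ) : Measurable (kern d) := by
  unfold kern; fun_prop

lemma kern_bound (d : ℝ) (hd : 0 < d) (R : ℝ) (hR : 0 < R) :
    (ENNReal.ofReal (R ^ d))⁻¹ ≤
      ENNReal.ofReal (3 ^ (d + 1)) * ∫⁻ r in Ioc (2 * R) (3 * R), kern d r := by
  have h1 : kern d (3 * R) * ENNReal.ofReal R ≤ ∫⁻ r in Ioc (2 * R) (3 * R), kern d r := by
    have : ∫⁻ r in Ioc (2 * R) (3 * R), kern d (3 * R) ≤
        ∫⁻ r in Ioc (2 * R) (3 * R), kern d r := by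
      apply setLIntegral_mono' measurableSet_Ioc
      intro r hr
      have hr0 : 0 < r := by linarith [hr.1]
      unfold kern
      gcongr
      · exact hr.2
      · exact hr.2
    refine le_trans (le_of_eq ?_) this
    rw [setLIntegral_const, Real.volume_Ioc]
    congr 2; ring
  refine le_trans (le_of_eq ?_) (mul_le_mul_right h1 _)
  unfold kern
  rw [← ENNReal.ofReal_inv_of_pos (by positivity), ← ENNReal.ofReal_inv_of_pos (by positivity),
    ← ENNReal.ofReal_inv_of_pos (by positivity), ← ENNReal.ofReal_mul (by positivity),
    ← ENNReal.ofReal_mul (by positivity), ← ENNReal.ofReal_mul (by positivity)]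
  congr 1
  rw [Real.mul_rpow (by norm_num) hR.le, Real.rpow_add (by norm_num), Real.rpow_one]
  have : (0:ℝ) < 3 ^ d := by positivity
  have : (0:ℝ) < R ^ d := by positivity
  field_simp

lemma riesz_eq {n : ℕ} (α : ℝ) (μ : Measure (EuclideanSpace ℝ (Fin n)))
    (x : EuclideanSpace ℝ (Fin n)) :
    riesz2 α μ x = ∫⁻ r in Ioi (0:ℝ), μ (ball x r) * kern ((n : ℝ) - 2 * α) r := by
  unfold riesz2 kern
  simp only [div_eq_mul_inv, mul_assoc]

lemma riesz_ball {n : ℕ} (α : ℝ) (hαn : 2 * α < n) (μ : Measure (EuclideanSpace ℝ (Fin n)))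
    (x : EuclideanSpace ℝ (Fin n)) (R : ℝ) (hR : 0 < R) (hx : ‖x‖ ≤ R) :
    μ (ball 0 R) * (ENNReal.ofReal (R ^ ((n : ℝ) - 2 * α)))⁻¹ ≤
      ENNReal.ofReal (3 ^ ((n : ℝ) - 2 * α + 1)) * riesz2 α μ x := by
  have h2 : μ (ball 0 R) * ∫⁻ r in Ioc (2 * R) (3 * R), kern ((n : ℝ) - 2 * α) r ≤
      riesz2 α μ x := by
    rw [riesz_eq, ← lintegral_const_mul _ (kern_meas _)]
    calc _ ≤ ∫⁻ r in Ioc (2 * R) (3 * R), μ (ball x r) * kern ((n : ℝ) - 2 * α) r := by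
            apply setLIntegral_mono' measurableSet_Ioc
            intro r hr
            gcongr
            apply ball_subset_ball'
            rw [dist_zero_left]
            linarith [hr.1]
      _ ≤ _ := by
            apply lintegral_mono_set
            intro r hr
            exact lt_trans (by linarith) hr.1
  calc _ ≤ μ (ball 0 R) * (ENNReal.ofReal (3 ^ ((n : ℝ) - 2 * α + 1)) *
        ∫⁻ r in Ioc (2 * R) (3 * R), kern ((n : ℝ) - 2 * α) r) := by
          gcongr
          exact kern_bound _ (by linarith) R hR
    _ ≤ _ := by
          rw [mul_left_comm]
          gcongr

lemma riesz_tail {n : ℕ} (α : ℝ) (hαn : 2 * α < n) (μ : Measure (EuclideanSpace ℝ (Fin n)))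
    [SFinite μ]
    (x : EuclideanSpace ℝ (Fin n)) (R : ℝ) (hR : 0 < R) (hx : ‖x‖ ≤ R) :
    ∫⁻ y in {y | R ≤ ‖y‖}, (ENNReal.ofReal (‖y‖ ^ ((n : ℝ) - 2 * α)))⁻¹ ∂μ ≤
      ENNReal.ofReal (3 ^ ((n : ℝ) - 2 * α + 1)) * riesz2 α μ x := by
  set d := (n : ℝ) - 2 * α with hd
  have hS : MeasurableSet {y : EuclideanSpace ℝ (Fin n) | R ≤ ‖y‖} :=
    measurableSet_le measurable_const measurable_norm
  have hP : MeasurableSet {p : EuclideanSpace ℝ (Fin n) × ℝ |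
      2 * ‖p.1‖ < p.2 ∧ p.2 ≤ 3 * ‖p.1‖} :=
    MeasurableSet.inter
      (measurableSet_lt (f := fun p : EuclideanSpace ℝ (Fin n) × ℝ => 2 * ‖p.1‖)
        (g := fun p => p.2) (by fun_prop) (by fun_prop))
      (measurableSet_le (f := fun p : EuclideanSpace ℝ (Fin n) × ℝ => p.2)
        (g := fun p => 3 * ‖p.1‖) (by fun_prop) (by fun_prop))
  calc _ ≤ ∫⁻ y in {y | R ≤ ‖y‖}, ENNReal.ofReal (3 ^ (d + 1)) *
        (∫⁻ r in Ioc (2 * ‖y‖) (3 * ‖y‖), kern d r) ∂μ := by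
        apply setLIntegral_mono' hS
        intro y hy
        exact kern_bound d (by linarith) _ (lt_of_lt_of_le hR hy)
    _ = ENNReal.ofReal (3 ^ (d + 1)) * ∫⁻ y in {y | R ≤ ‖y‖},
        (∫⁻ r in Ioc (2 * ‖y‖) (3 * ‖y‖), kern d r) ∂μ := by
        rw [lintegral_const_mul' _ _ ENNReal.ofReal_ne_top]
    _ ≤ _ := by
        gcongr
        have e : ∀ y : EuclideanSpace ℝ (Fin n),
            (∫⁻ r in Ioc (2 * ‖y‖) (3 * ‖y‖), kern d r) =
            ∫⁻ r, {p : EuclideanSpace ℝ (Fin n) × ℝ |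
              2 * ‖p.1‖ < p.2 ∧ p.2 ≤ 3 * ‖p.1‖}.indicator (fun p => kern d p.2) (y, r) := by
          intro y
          rw [← lintegral_indicator measurableSet_Ioc]
          rfl
        simp_rw [e]
        rw [lintegral_lintegral_swap]
        · rw [riesz_eq, ← lintegral_indicator measurableSet_Ioi]
          apply lintegral_mono
          intro r
          dsimp only
          by_cases hr : 0 < r
          · rw [indicator_of_mem (by exact hr)]
            calc _ ≤ ∫⁻ y in {y | R ≤ ‖y‖}, (ball x r).indicator (fun _ => kern d r) y ∂μ := by
                  apply setLIntegral_mono' hS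
                  intro y hy
                  have hy' : R ≤ ‖y‖ := hy
                  by_cases h : 2 * ‖y‖ < r ∧ r ≤ 3 * ‖y‖
                  · rw [indicator_of_mem (by exact h), indicator_of_mem]
                    rw [mem_ball, dist_eq_norm]
                    linarith [norm_sub_le y x, h.1]
                  · rw [indicator_of_notMem (by exact h)]
                    exact zero_le
              _ ≤ ∫⁻ y, (ball x r).indicator (fun _ => kern d r) y ∂μ :=
                  setLIntegral_le_lintegral _ _
              _ = _ := by
                  rw [lintegral_indicator measurableSet_ball, setLIntegral_const, mul_comm]
          · rw [indicator_of_notMem (by exact hr), nonpos_iff_eq_zero]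
            apply lintegral_eq_zero_of_ae_eq_zero
            apply Filter.Eventually.of_forall
            intro y
            apply indicator_of_notMem
            rintro ⟨h, -⟩
            have := norm_nonneg y
            simp only at h
            linarith
        · exact (((kern_meas d).comp measurable_snd).indicator hP).aemeasurable

lemma level_bound {E : Type*} [NormedAddCommGroup E] [MeasurableSpace E]
    (m : Measure E) (t : ENNReal) :
    m {y | m {z | ‖y‖ ≤ ‖z‖} ≤ t} ≤ t := by
  set T : Set ℝ := {r | m {z | r ≤ ‖z‖} ≤ t} with hT
  have hup : ∀ a b, a ∈ T → a ≤ b → b ∈ T := by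
    intro a b ha hab
    exact (measure_mono (fun z hz => le_trans hab hz)).trans ha
  by_cases hmin : ∃ a, IsLeast T a
  · obtain ⟨a, ha, hla⟩ := hmin
    have ha' : m {z | a ≤ ‖z‖} ≤ t := ha
    refine le_trans (measure_mono ?_) ha'
    intro y hy
    exact hla hy
  · have hsub : {y : E | m {z | ‖y‖ ≤ ‖z‖} ≤ t} ⊆
        ⋃ p ∈ {p : ℚ | (p : ℝ) ∈ T}, {z : E | (p : ℝ) ≤ ‖z‖} := by
      intro y hy
      have hyT : ‖y‖ ∈ T := hy
      have : ∃ r' ∈ T, r' < ‖y‖ := by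
        by_contra! hcon
        exact hmin ⟨‖y‖, hyT, fun r hr => hcon r hr⟩
      obtain ⟨r', hr', hlt⟩ := this
      obtain ⟨p, hp1, hp2⟩ := exists_rat_btwn hlt
      simp only [mem_iUnion]
      exact ⟨p, hup _ _ hr' hp1.le, hp2.le⟩
    refine (measure_mono hsub).trans ?_
    rw [measure_biUnion_eq_iSup (to_countable _)]
    · exact iSup₂_le fun p hp => hp
    · intro p hp p' hp'
      rcases le_total p p' with h | h
      · refine ⟨p, hp, fun z hz => hz, fun z hz => ?_⟩
        exact le_trans (Rat.cast_le.2 h) (show _ ≤ ‖z‖ from hz)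
      · refine ⟨p', hp', fun z hz => ?_, fun z hz => hz⟩
        exact le_trans (Rat.cast_le.2 h) (show _ ≤ ‖z‖ from hz)

lemma tail_finite {E : Type*} [NormedAddCommGroup E] [MeasurableSpace E] [OpensMeasurableSpace E]
    (σ ν : Measure E) (v : E → ENNReal) (hvm : Measurable v) (S : Set E) (hS : MeasurableSet S)
    (c : ENNReal) (hc0 : c ≠ 0) (hct : c ≠ ⊤) (q : ℝ) (hq : 0 < q) (hq1 : q < 1)
    (m : Measure E) (hm : m = (ν.restrict S).withDensity v) (hW : m univ ≠ ⊤)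
    (h1 : ∀ A ⊆ S, MeasurableSet A → ∀ t, (∀ y ∈ A, t < m {z | ‖y‖ ≤ ‖z‖}) →
      (c * t) ^ q * σ A ≤ ν A)
    (h0 : ∀ Z ⊆ S, MeasurableSet Z → ν Z = 0 → σ Z = 0)
    (hv : ∀ y ∈ S, v y ≠ 0) : ∫⁻ y in S, v y ∂σ < ⊤ := by
  set W := m univ with hWdef
  set g : E → ENNReal := fun y => m {z | ‖y‖ ≤ ‖z‖} with hg
  have hgm : Measurable g := by
    have : Antitone (fun r : ℝ => m {z : E | r ≤ ‖z‖}) :=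
      fun a b hab => measure_mono (fun z hz => le_trans hab hz)
    exact this.measurable.comp measurable_norm
  have hgW : ∀ y, g y ≤ W := fun y => measure_mono (subset_univ _)
  have hmA : ∀ A ⊆ S, MeasurableSet A → ∫⁻ y in A, v y ∂ν = m A := by
    intro A hA hAm
    rw [hm, withDensity_apply _ hAm, Measure.restrict_restrict hAm, inter_eq_left.2 hA]
  set h : ENNReal := 2⁻¹ with hh
  have hh0 : h ≠ 0 := by simp [hh]
  have hht : h ≠ ⊤ := by simp [hh]
  have hh1 : h < 1 := by simp [hh, ENNReal.inv_lt_one]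
  set Z := S ∩ {y | g y = 0} with hZ
  set F : ℕ → Set E := fun k => S ∩ {y | W * h ^ (k + 1) < g y ∧ g y ≤ W * h ^ k} with hF
  have hZm : MeasurableSet Z := hS.inter (measurableSet_eq_fun hgm measurable_const)
  have hFm : ∀ k, MeasurableSet (F k) := fun k =>
    hS.inter ((measurableSet_lt measurable_const hgm).inter
      (measurableSet_le hgm measurable_const))
  have hcover : S ⊆ Z ∪ ⋃ k, F k := by
    intro y hy
    by_cases hgy : g y = 0
    · exact Or.inl ⟨hy, hgy⟩
    right
    have hex : ∃ k : ℕ, W * h ^ (k + 1) < g y := by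
      have hlim : Filter.Tendsto (fun k : ℕ => W * h ^ (k + 1)) Filter.atTop (nhds (W * 0)) := by
        apply ENNReal.Tendsto.const_mul _ (Or.inr hW)
        exact (ENNReal.tendsto_pow_atTop_nhds_zero_of_lt_one hh1).comp
          (Filter.tendsto_add_atTop_nat 1)
      rw [mul_zero] at hlim
      exact (hlim.eventually (gt_mem_nhds (pos_iff_ne_zero.2 hgy))).exists
    classical
    refine mem_iUnion.2 ⟨Nat.find hex, hy, Nat.find_spec hex, ?_⟩
    rcases Nat.eq_zero_or_pos (Nat.find hex) with hz | hp
    · rw [hz, pow_zero, mul_one]; exact hgW y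
    · have := Nat.find_min hex (Nat.sub_lt hp one_pos)
      rw [show Nat.find hex - 1 + 1 = Nat.find hex by omega] at this
      exact not_lt.1 this
  have hZ0 : ∫⁻ y in Z, v y ∂σ = 0 := by
    have hm0 : m Z = 0 := by
      have := level_bound m 0
      rw [← nonpos_iff_eq_zero]
      refine (measure_mono ?_).trans this
      rintro y ⟨-, hy⟩
      exact le_of_eq hy
    rw [← hmA Z inter_subset_left hZm, setLIntegral_eq_zero_iff hZm hvm] at hm0
    have hν : ν Z = 0 := by
      rw [measure_eq_zero_iff_ae_notMem]
      filter_upwards [hm0] with y hy hyZ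
      exact hv y hyZ.1 (hy hyZ)
    exact setLIntegral_measure_zero _ _ (h0 Z inter_subset_left hZm hν)
  set p := h ^ q with hp
  set s := h ^ (1 - q) with hs
  have hp0 : p ≠ 0 := (ENNReal.rpow_pos (pos_iff_ne_zero.2 hh0) hht).ne'
  have hpt : p ≠ ⊤ := ENNReal.rpow_ne_top_of_nonneg hq.le hht
  have hsp : s * p = h := by
    rw [hs, hp, ← ENNReal.rpow_add _ _ hh0 hht]; simp
  have hs1 : s < 1 := ENNReal.rpow_lt_one hh1 (by linarith)
  by_cases hW0 : W = 0
  · have hSZ : S ⊆ Z := fun y hy => ⟨hy, by simpa [hW0] using hgW y⟩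
    refine lt_of_le_of_lt (lintegral_mono_set hSZ) ?_
    rw [hZ0]; exact ENNReal.zero_lt_top
  set B := c * W * h with hB
  have hB0 : B ≠ 0 := mul_ne_zero (mul_ne_zero hc0 hW0) hh0
  have hBt : B ≠ ⊤ := ENNReal.mul_ne_top (ENNReal.mul_ne_top hct hW) hht
  have hBq0 : B ^ q ≠ 0 := (ENNReal.rpow_pos (pos_iff_ne_zero.2 hB0) hBt).ne'
  have hBqt : B ^ q ≠ ⊤ := ENNReal.rpow_ne_top_of_nonneg hq.le hBt
  have hFk : ∀ k, ∫⁻ y in F k, v y ∂σ ≤ (W / B ^ q) * s ^ k := by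
    intro k
    have e1 : (c * (W * h ^ (k + 1))) ^ q = B ^ q * p ^ k := by
      have : c * (W * h ^ (k + 1)) = B * h ^ k := by rw [hB, pow_succ]; ring
      rw [this, ENNReal.mul_rpow_of_nonneg _ _ hq.le, hp]
      congr 1
      rw [← ENNReal.rpow_natCast, ← ENNReal.rpow_natCast, ← ENNReal.rpow_mul,
        ← ENNReal.rpow_mul, mul_comm]
    have hle : (B ^ q * p ^ k) • σ.restrict (F k) ≤ ν.restrict (F k) := by
      rw [Measure.le_iff]
      intro A hA
      rw [Measure.smul_apply, smul_eq_mul, Measure.restrict_apply hA, Measure.restrict_apply hA,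
        ← e1]
      exact h1 _ (fun y hy => hy.2.1) (hA.inter (hFm k)) _ (fun y hy => hy.2.2.1)
    have h2 : (B ^ q * p ^ k) * ∫⁻ y in F k, v y ∂σ ≤ W * h ^ k := by
      calc _ = ∫⁻ y, v y ∂((B ^ q * p ^ k) • σ.restrict (F k)) := by
              rw [lintegral_smul_measure, smul_eq_mul]
        _ ≤ ∫⁻ y in F k, v y ∂ν := lintegral_mono' hle le_rfl
        _ = m (F k) := hmA _ inter_subset_left (hFm k)
        _ ≤ m {y | m {z | ‖y‖ ≤ ‖z‖} ≤ W * h ^ k} := measure_mono (fun y hy => hy.2.2)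
        _ ≤ _ := level_bound m _
    have hpk0 : p ^ k ≠ 0 := pow_ne_zero _ hp0
    have hpkt : p ^ k ≠ ⊤ := ENNReal.pow_ne_top hpt
    rw [← hsp, mul_pow] at h2
    have h3 : (∫⁻ y in F k, v y ∂σ) * B ^ q ≤ W * s ^ k := by
      rw [← ENNReal.mul_le_mul_iff_left hpk0 hpkt]
      calc _ = (B ^ q * p ^ k) * ∫⁻ y in F k, v y ∂σ := by ring
        _ ≤ _ := h2
        _ = _ := by ring
    calc _ ≤ (W * s ^ k) / B ^ q :=
          (ENNReal.le_div_iff_mul_le (Or.inl hBq0) (Or.inl hBqt)).2 h3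
      _ = _ := by simp only [div_eq_mul_inv]; ring
  calc _ ≤ ∫⁻ y in Z ∪ ⋃ k, F k, v y ∂σ := lintegral_mono_set hcover
    _ ≤ ∫⁻ y in Z, v y ∂σ + ∫⁻ y in ⋃ k, F k, v y ∂σ := lintegral_union_le _ _ _
    _ ≤ 0 + ∑' k, (W / B ^ q) * s ^ k := by
        rw [hZ0]
        gcongr
        exact (lintegral_iUnion_le _ _).trans (ENNReal.tsum_le_tsum hFk)
    _ < ⊤ := by
        rw [zero_add, ENNReal.tsum_mul_left, ENNReal.tsum_geometric]
        apply ENNReal.mul_lt_top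
        · exact ENNReal.div_lt_top hW hBq0
        · rw [ENNReal.inv_lt_top]
          exact tsub_pos_of_lt hs1

theorem stmt11 {n : ℕ} (α q : ℝ) (σ : Measure (EuclideanSpace ℝ (Fin n)))
    [IsLocallyFiniteMeasure σ]
    (hq : 0 < q) (hq1 : q < 1) (hα : 0 < α) (hαn : 2 * α < n)
    (hrad : ∀ e : EuclideanSpace ℝ (Fin n) ≃ₗᵢ[ℝ] EuclideanSpace ℝ (Fin n),
      σ.map e = σ)
    (u : EuclideanSpace ℝ (Fin n) → ENNReal)
    (hurad : ∀ x y : EuclideanSpace ℝ (Fin n), ‖x‖ = ‖y‖ → u x = u y)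
    (hnz : ¬ (∀ x, u x = 0)) (hni : ¬ (∀ x, u x = ⊤))
    (hsuper : ∀ x, riesz2 α (σ.withDensity fun y => (u y) ^ q) x ≤ u x)
    (C : ENNReal) (hC : C ≠ ⊤)
    (hdual : ∀ R : ℝ, 0 < R →
      (∫⁻ y in ball (0 : EuclideanSpace ℝ (Fin n)) R,
          (ENNReal.ofReal (‖y‖ ^ (((n : ℝ) - 2 * α) * q)))⁻¹ ∂σ) ^ (1 / (1 - q))
        ≤ C * ∫⁻ y in ball (0 : EuclideanSpace ℝ (Fin n)) R, (u y) ^ q ∂σ) :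
    (∃ c : ENNReal, 0 < c ∧
      ∀ x : EuclideanSpace ℝ (Fin n), x ≠ 0 →
        c * ((∫⁻ y in ball (0 : EuclideanSpace ℝ (Fin n)) ‖x‖,
            (ENNReal.ofReal (‖y‖ ^ (((n : ℝ) - 2 * α) * q)))⁻¹ ∂σ) ^ (1 / (1 - q)) /
          ENNReal.ofReal (‖x‖ ^ ((n : ℝ) - 2 * α))) ≤ u x) ∧
    ((∃ x, u x < ⊤) →
      (∫⁻ y in ball (0 : EuclideanSpace ℝ (Fin n)) 1,
          (ENNReal.ofReal (‖y‖ ^ (((n : ℝ) - 2 * α) * q)))⁻¹ ∂σ) < ⊤ ∧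
      (∫⁻ y in {y : EuclideanSpace ℝ (Fin n) | 1 ≤ ‖y‖},
          (ENNReal.ofReal (‖y‖ ^ ((n : ℝ) - 2 * α)))⁻¹ ∂σ) < ⊤) := by
  set d := (n : ℝ) - 2 * α with hd
  have hd0 : 0 < d := by rw [hd]; linarith
  have he0 : 0 < 1 / (1 - q) := by
    have : 0 < 1 - q := by linarith
    positivity
  set ν := σ.withDensity fun y => (u y) ^ q with hν
  set K : ENNReal := ENNReal.ofReal (3 ^ (d + 1)) with hK
  have hK0 : K ≠ 0 := by
    have : (0:ℝ) < 3 ^ (d + 1) := by positivity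
    simpa [hK] using this
  have hKt : K ≠ ⊤ := ENNReal.ofReal_ne_top
  set J : ℝ → ENNReal := fun R => ∫⁻ y in ball (0 : EuclideanSpace ℝ (Fin n)) R,
    (ENNReal.ofReal (‖y‖ ^ (d * q)))⁻¹ ∂σ with hJ
  have hJmono : ∀ a b, a ≤ b → J a ≤ J b :=
    fun a b hab => lintegral_mono_set (ball_subset_ball hab)
  have hdual' : ∀ R, 0 < R → J R ^ (1 / (1 - q)) ≤ C * ν (ball 0 R) := by
    intro R hR
    rw [hν, withDensity_apply _ measurableSet_ball]
    exact hdual R hR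
  have hball : ∀ x R, 0 < R → ‖x‖ ≤ R →
      ν (ball 0 R) * (ENNReal.ofReal (R ^ d))⁻¹ ≤ K * u x := by
    intro x R hR hx
    exact (riesz_ball α hαn ν x R hR hx).trans (mul_le_mul_right (hsuper x) _)
  have htail : ∀ x R, 0 < R → ‖x‖ ≤ R →
      ∫⁻ y in {y | R ≤ ‖y‖}, (ENNReal.ofReal (‖y‖ ^ d))⁻¹ ∂ν ≤ K * u x := by
    intro x R hR hx
    exact (riesz_tail α hαn ν x R hR hx).trans (mul_le_mul_right (hsuper x) _)
  set c : ENNReal := (K * (C + 1))⁻¹ with hc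
  have hKC0 : K * (C + 1) ≠ 0 := mul_ne_zero hK0 (by simp)
  have hKCt : K * (C + 1) ≠ ⊤ := ENNReal.mul_ne_top hKt (by simp [hC])
  have hc0 : 0 < c := ENNReal.inv_pos.2 hKCt
  have hpart : ∀ x : EuclideanSpace ℝ (Fin n), x ≠ 0 →
      c * (J ‖x‖ ^ (1 / (1 - q)) / ENNReal.ofReal (‖x‖ ^ d)) ≤ u x := by
    intro x hx
    have hx0 : 0 < ‖x‖ := norm_pos_iff.2 hx
    rw [hc, mul_comm, ← div_eq_mul_inv]
    apply ENNReal.div_le_of_le_mul'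
    calc _ ≤ (C * ν (ball 0 ‖x‖)) * (ENNReal.ofReal (‖x‖ ^ d))⁻¹ := by
            rw [div_eq_mul_inv]
            gcongr
            exact hdual' _ hx0
      _ ≤ (C + 1) * (ν (ball 0 ‖x‖) * (ENNReal.ofReal (‖x‖ ^ d))⁻¹) := by
            rw [mul_assoc]
            gcongr
            exact le_self_add
      _ ≤ (C + 1) * (K * u x) := by
            exact mul_le_mul_right (hball x _ hx0 le_rfl) _
      _ = _ := by ring
  refine ⟨⟨c, hc0, hpart⟩, ?_⟩
  rintro ⟨x0, hx0⟩
  have hKu : K * u x0 < ⊤ := ENNReal.mul_lt_top hKt.lt_top hx0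
  constructor
  · set R := max 1 ‖x0‖ with hR
    have hR1 : 1 ≤ R := le_max_left _ _
    have hR0 : 0 < R := by linarith
    have hb := lt_of_le_of_lt (hball x0 R hR0 (le_max_right _ _)) hKu
    have hνb : ν (ball 0 R) ≠ ⊤ := by
      intro h
      rw [h, ENNReal.top_mul (ENNReal.inv_ne_zero.2 ENNReal.ofReal_ne_top)] at hb
      exact lt_irrefl _ hb
    have h1 : J R ^ (1 / (1 - q)) < ⊤ :=
      lt_of_le_of_lt (hdual' R hR0) (ENNReal.mul_lt_top hC.lt_top hνb.lt_top)
    have h2 : J R < ⊤ := (ENNReal.rpow_lt_top_iff_of_pos he0).1 h1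
    exact lt_of_le_of_lt (hJmono 1 R hR1) h2
  · by_cases hσ : σ = 0
    · simp [hσ]
    obtain ⟨N, hN⟩ : ∃ N : ℕ, σ (ball 0 (N : ℝ)) ≠ 0 := by
      by_contra! hcon
      apply hσ
      rw [← Measure.measure_univ_eq_zero, ← iUnion_ball_nat (0 : EuclideanSpace ℝ (Fin n))]
      exact measure_iUnion_null hcon
    have hJN : J N ≠ 0 := by
      intro h
      rw [hJ] at h
      dsimp only at h
      rw [setLIntegral_eq_zero_iff measurableSet_ball (by fun_prop)] at h
      apply hN
      rw [measure_eq_zero_iff_ae_notMem]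
      filter_upwards [h] with y hy hyb
      exact ENNReal.inv_ne_zero.2 ENNReal.ofReal_ne_top (hy hyb)
    set ρ := max (max 1 ‖x0‖) N with hρ
    have hρ1 : 1 ≤ ρ := (le_max_left _ _).trans (le_max_left _ _)
    have hρx : ‖x0‖ ≤ ρ := (le_max_right _ _).trans (le_max_left _ _)
    have hρN : (N : ℝ) ≤ ρ := le_max_right _ _
    have hρ0 : 0 < ρ := by linarith
    set v : EuclideanSpace ℝ (Fin n) → ENNReal := fun y => (ENNReal.ofReal (‖y‖ ^ d))⁻¹ with hv
    have hvm : Measurable v := by rw [hv]; fun_prop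
    set S : Set (EuclideanSpace ℝ (Fin n)) := {y | ρ ≤ ‖y‖} with hS
    have hSm : MeasurableSet S := measurableSet_le measurable_const measurable_norm
    have hmain : ∫⁻ y in S, v y ∂σ < ⊤ := by
      refine tail_finite σ ν v hvm S hSm K⁻¹ (ENNReal.inv_ne_zero.2 hKt)
        (ENNReal.inv_ne_top.2 hK0) q hq hq1 _ rfl ?_ ?_ ?_ ?_
      · rw [withDensity_apply _ MeasurableSet.univ, Measure.restrict_univ]
        exact (lt_of_le_of_lt (htail x0 ρ hρ0 hρx) hKu).ne
      · intro A hA hAm t ht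
        rw [hν, withDensity_apply _ hAm, ← setLIntegral_const]
        apply setLIntegral_mono' hAm
        intro y hy
        have hyρ : ρ ≤ ‖y‖ := hA hy
        apply ENNReal.rpow_le_rpow _ hq.le
        rw [mul_comm, ← div_eq_mul_inv]
        apply ENNReal.div_le_of_le_mul'
        refine (ht y hy).le.trans ?_
        have hm : MeasurableSet {z : EuclideanSpace ℝ (Fin n) | ‖y‖ ≤ ‖z‖} :=
          measurableSet_le measurable_const measurable_norm
        rw [withDensity_apply _ hm, Measure.restrict_restrict hm]
        exact (lintegral_mono_set inter_subset_left).trans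
          (htail y ‖y‖ (by linarith) le_rfl)
      · intro Z hZ hZm hνZ
        set f : EuclideanSpace ℝ (Fin n) → ENNReal := fun y =>
          (c * (J N ^ (1 / (1 - q)) / ENNReal.ofReal (‖y‖ ^ d))) ^ q with hf
        have hfm : Measurable f := by rw [hf]; fun_prop
        have hfZ : ∫⁻ y in Z, f y ∂σ = 0 := by
          rw [← nonpos_iff_eq_zero, ← hνZ, hν, withDensity_apply _ hZm]
          apply setLIntegral_mono' hZm
          intro y hy
          have hyρ : ρ ≤ ‖y‖ := hZ hy
          apply ENNReal.rpow_le_rpow _ hq.le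
          refine le_trans ?_ (hpart y (norm_pos_iff.1 (by linarith)))
          gcongr
          exact hJmono _ _ (hρN.trans hyρ)
        rw [setLIntegral_eq_zero_iff hZm hfm] at hfZ
        rw [measure_eq_zero_iff_ae_notMem]
        filter_upwards [hfZ] with y hy hyZ
        have := hy hyZ
        rw [hf] at this
        dsimp only at this
        rw [ENNReal.rpow_eq_zero_iff_of_pos hq, mul_eq_zero, ENNReal.div_eq_zero_iff,
          ENNReal.rpow_eq_zero_iff_of_pos he0] at this
        rcases this with h | h | h
        · exact hc0.ne' h
        · exact hJN h
        · exact ENNReal.ofReal_ne_top h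
      · intro y hy
        exact ENNReal.inv_ne_zero.2 ENNReal.ofReal_ne_top
    have hcov : {y : EuclideanSpace ℝ (Fin n) | 1 ≤ ‖y‖} ⊆
        ({y | 1 ≤ ‖y‖} ∩ closedBall 0 ρ) ∪ S := by
      intro y hy
      rcases le_total ‖y‖ ρ with h | h
      · exact Or.inl ⟨hy, by simpa using h⟩
      · exact Or.inr h
    have hmS : MeasurableSet ({y : EuclideanSpace ℝ (Fin n) | 1 ≤ ‖y‖} ∩ closedBall 0 ρ) :=
      (measurableSet_le measurable_const measurable_norm).inter measurableSet_closedBall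
    refine lt_of_le_of_lt (lintegral_mono_set hcov) ?_
    refine lt_of_le_of_lt (lintegral_union_le _ _ _) (ENNReal.add_lt_top.2 ⟨?_, hmain⟩)
    calc _ ≤ ∫⁻ y in ({y : EuclideanSpace ℝ (Fin n) | 1 ≤ ‖y‖} ∩ closedBall 0 ρ), 1 ∂σ := by
          apply setLIntegral_mono' hmS
          rintro y ⟨hy, -⟩
          rw [ENNReal.inv_le_one, ENNReal.one_le_ofReal]
          exact Real.one_le_rpow hy hd0.le
      _ = σ ({y : EuclideanSpace ℝ (Fin n) | 1 ≤ ‖y‖} ∩ closedBall 0 ρ) := setLIntegral_one _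
      _ ≤ σ (closedBall 0 ρ) := measure_mono inter_subset_right
      _ < ⊤ := measure_closedBall_lt_top
end

section
/- Let 0 < q < 1, 0 < 2α < n, β > 1, and set s = (1-q)n + 2αq (so 2α < s < n). Define σ(y) = |y|^{-s} (log(1/|y|))^{-β} for |y| < 1/2 and σ(y) = 0 for |y| ≥ 1/2. Then: (a) ∫_{|y|<1} |y|^{-(n-2α)q} dσ(y) < ∞ and ∫_{|y|≥1} |y|^{-(n-2α)} dσ(y) = 0; (b) for small |x| > 0, ∫_{|y|<|x|} |y|^{-(n-2α)q} dσ(y) ≈ (log(1/|x|))^{1-β} and ∫_{|y|≥|x|} |y|^{-(n-2α)} dσ(y) ≈ |x|^{-(n-2α)(1-q)} (log(1/|x|))^{-β}; (c) consequently the ratio [|x|^{-(n-2α)(1-q)} ∫_{|y|<|x|} |y|^{-(n-2α)q} dσ(y)] / [∫_{|y|≥|x|} |y|^{-(n-2α)} dσ(y)] ≈ log(1/|x|) → ∞ as |x| → 0. -/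
open MeasureTheory Metric Set Filter

/-- The ratio `[r^{-(n-2α)(1-q)} ∫_{B(0,r)} |y|^{-(n-2α)q} dσ] / [∫_{|y|≥r} |y|^{-(n-2α)} dσ]`. -/
noncomputable def ratioFn {n : ℕ} (α q : ℝ)
    (σ : Measure (EuclideanSpace ℝ (Fin n))) (r : ℝ) : ENNReal :=
  (∫⁻ y in ball (0 : EuclideanSpace ℝ (Fin n)) r,
      (ENNReal.ofReal (‖y‖ ^ (((n : ℝ) - 2 * α) * q)))⁻¹ ∂σ) /
    ENNReal.ofReal (r ^ (((n : ℝ) - 2 * α) * (1 - q))) /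
    (∫⁻ y in {y : EuclideanSpace ℝ (Fin n) | r ≤ ‖y‖},
      (ENNReal.ofReal (‖y‖ ^ ((n : ℝ) - 2 * α)))⁻¹ ∂σ)

/-- The measure with density `|y|^{-s} (log(1/|y|))^{-β}` on `{|y| < 1/2}` and `0` outside. -/
noncomputable def sigmaEx (n : ℕ) (s β : ℝ) : Measure (EuclideanSpace ℝ (Fin n)) :=
  (volume : Measure (EuclideanSpace ℝ (Fin n))).withDensity fun y =>
    if ‖y‖ < 1 / 2 then
      ENNReal.ofReal (‖y‖ ^ (-s) * (Real.log (1 / ‖y‖)) ^ (-β))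
    else 0


lemma polar_lintegral {E : Type*} [NormedAddCommGroup E] [NormedSpace ℝ E]
    [FiniteDimensional ℝ E] [Nontrivial E] [MeasurableSpace E] [BorelSpace E]
    (μ : Measure E) [μ.IsAddHaarMeasure] (f : ℝ → ENNReal) (hf : Measurable f) :
    ∫⁻ x, f ‖x‖ ∂μ = μ.toSphere univ *
      ∫⁻ t in Ioi (0 : ℝ), ENNReal.ofReal (t ^ (Module.finrank ℝ E - 1)) * f t := by
  calc
    ∫⁻ x, f ‖x‖ ∂μ = ∫⁻ x : ({(0)}ᶜ : Set E), f (‖x.1‖) ∂(μ.comap (↑)) := by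
      rw [lintegral_subtype_comap (measurableSet_singleton _).compl fun x ↦ f (‖x‖),
        MeasureTheory.restrict_compl_singleton]
    _ = ∫⁻ x, f x.2 ∂μ.toSphere.prod (.volumeIoiPow (Module.finrank ℝ E - 1)) := by
      rw [← μ.measurePreserving_homeomorphUnitSphereProd.lintegral_comp_emb
        (Homeomorph.measurableEmbedding _)]
      simp
    _ = μ.toSphere univ * ∫⁻ x : Ioi (0 : ℝ), f x ∂(.volumeIoiPow (Module.finrank ℝ E - 1)) := by
      rw [lintegral_prod _ (by fun_prop)]
      simp [mul_comm]
    _ = _ := by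
      congr 1
      rw [Measure.volumeIoiPow, lintegral_withDensity_eq_lintegral_mul _ (by fun_prop)
        (by fun_prop)]
      exact lintegral_subtype_comap measurableSet_Ioi
        (fun t : ℝ => ENNReal.ofReal (t ^ (Module.finrank ℝ E - 1)) * f t)

lemma sigma_lintegral {n : ℕ} (hn : 1 ≤ n) (s β p : ℝ) (T : Set ℝ) (hT : MeasurableSet T) :
    ∫⁻ y in {y : EuclideanSpace ℝ (Fin n) | ‖y‖ ∈ T},
      (ENNReal.ofReal (‖y‖ ^ p))⁻¹ ∂(sigmaEx n s β) =
    (volume : Measure (EuclideanSpace ℝ (Fin n))).toSphere univ *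
      ∫⁻ t in T ∩ Ioo 0 (1 / 2),
        ENNReal.ofReal (t ^ ((n : ℝ) - 1 - p - s) * (Real.log (1 / t)) ^ (-β)) := by
  have : Nonempty (Fin n) := ⟨⟨0, hn⟩⟩
  have hT' : MeasurableSet {y : EuclideanSpace ℝ (Fin n) | ‖y‖ ∈ T} := measurable_norm hT
  have hm : Measurable (fun t : ℝ => if t < 1 / 2 then
      ENNReal.ofReal (t ^ (-s) * (Real.log (1 / t)) ^ (-β)) else 0) := by
    refine Measurable.ite measurableSet_Iio ?_ measurable_const
    fun_prop
  let g : ℝ → ENNReal := T.indicator (fun t => (if t < 1 / 2 then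
      ENNReal.ofReal (t ^ (-s) * (Real.log (1 / t)) ^ (-β)) else 0) * (ENNReal.ofReal (t ^ p))⁻¹)
  have hg : Measurable g := by
    refine Measurable.indicator (hm.mul ?_) hT
    fun_prop
  have hm' : Measurable (fun y : EuclideanSpace ℝ (Fin n) => if ‖y‖ < 1 / 2 then
      ENNReal.ofReal (‖y‖ ^ (-s) * (Real.log (1 / ‖y‖)) ^ (-β)) else 0) :=
    hm.comp measurable_norm
  unfold sigmaEx
  rw [setLIntegral_withDensity_eq_setLIntegral_mul _ hm' (by fun_prop) hT',
    ← lintegral_indicator hT']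
  trans ∫⁻ y : EuclideanSpace ℝ (Fin n), g ‖y‖
  · refine lintegral_congr fun y => ?_
    simp only [g, indicator, mem_ofPred_eq]
    rfl
  rw [polar_lintegral _ g hg, finrank_euclideanSpace, Fintype.card_fin]
  congr 1
  rw [← lintegral_indicator measurableSet_Ioi, ← lintegral_indicator (hT.inter measurableSet_Ioo)]
  refine lintegral_congr fun t => ?_
  by_cases h0 : 0 < t
  swap
  · simp [h0]
  by_cases h1 : t ∈ T
  swap
  · simp [h1, g]
  by_cases h2 : t < 1 / 2
  swap
  · rw [indicator_of_mem (by exact h0), indicator_of_notMem (by simp only [mem_inter_iff, mem_Ioo]; tauto)]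
    simp only [g, indicator_of_mem h1, if_neg h2]; simp
  rw [indicator_of_mem (by exact h0), indicator_of_mem (show t ∈ T ∩ Ioo 0 (1 / 2) from ⟨h1, h0, h2⟩)]
  simp only [g, indicator_of_mem h1, if_pos h2]
  rw [← ENNReal.ofReal_inv_of_pos (Real.rpow_pos_of_pos h0 _),
    ← ENNReal.ofReal_mul' (by positivity), ← ENNReal.ofReal_mul (by positivity)]
  congr 1
  rw [← Real.rpow_neg h0.le, ← Real.rpow_natCast, Nat.cast_sub hn,
    show (n : ℝ) - 1 - p - s = ((n : ℝ) - (1 : ℕ)) + -s + -p by push_cast; ring,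
    Real.rpow_add h0, Real.rpow_add h0]
  ring

lemma lintegral_Ioi_rpow' {a c : ℝ} (ha : 0 < a) (hc : 0 < c) :
    ∫⁻ t in Ioi c, ENNReal.ofReal (t ^ (-a - 1)) = ENNReal.ofReal (c ^ (-a) / a) := by
  rw [← ofReal_integral_eq_lintegral_ofReal (integrableOn_Ioi_rpow_of_lt (by linarith) hc),
    integral_Ioi_rpow_of_lt (by linarith) hc]
  · congr 1
    rw [show -a - 1 + 1 = -a by ring, neg_div_neg_eq]
  · filter_upwards [ae_restrict_mem measurableSet_Ioi] with t ht
    have : 0 < t := hc.trans ht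
    positivity

lemma inner_int {β r : ℝ} (hβ : 1 < β) (hr : 0 < r) (hr1 : r ≤ 1 / 2) :
    ∫⁻ t in Ioo 0 r, ENNReal.ofReal (t ^ (-1 : ℝ) * (Real.log (1 / t)) ^ (-β)) =
      ENNReal.ofReal ((Real.log (1 / r)) ^ (1 - β) / (β - 1)) := by
  have him : Ioo 0 r = (fun u : ℝ => Real.exp (-u)) '' Ioi (Real.log (1 / r)) := by
    ext t
    simp only [mem_Ioo, mem_image, mem_Ioi, one_div, Real.log_inv]
    constructor
    · rintro ⟨h0, h1⟩
      exact ⟨-Real.log t, neg_lt_neg (Real.log_lt_log h0 h1), by rw [neg_neg, Real.exp_log h0]⟩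
    · rintro ⟨u, hu, rfl⟩
      exact ⟨Real.exp_pos _, by rw [← Real.lt_log_iff_exp_lt hr]; linarith⟩
  have hL : 0 < Real.log (1 / r) := by
    apply Real.log_pos
    rw [lt_div_iff₀ hr]; linarith
  rw [him, lintegral_image_eq_lintegral_abs_deriv_mul measurableSet_Ioi
    (f' := fun u => -Real.exp (-u))]
  · rw [show (1 - β) = -(β - 1) by ring, ← lintegral_Ioi_rpow' (by linarith) hL]
    refine setLIntegral_congr_fun measurableSet_Ioi fun u hu => ?_
    rw [← ENNReal.ofReal_mul (by positivity)]
    congr 1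
    rw [abs_neg, abs_of_pos (Real.exp_pos _), Real.rpow_neg_one, one_div, Real.log_inv,
      Real.log_exp, neg_neg, ← mul_assoc, mul_inv_cancel₀ (Real.exp_pos _).ne', one_mul]
    congr 1; ring
  · intro x _
    have := ((hasDerivAt_id x).neg.exp).hasDerivWithinAt (s := Ioi (Real.log (1 / r)))
    simpa using this
  · intro x _ y _ h
    simpa using h

lemma outer_lower {a β r : ℝ} (ha : 0 < a) (hβ : 1 < β) (hr : 0 < r) (hr1 : r < 1 / 4) :
    ENNReal.ofReal (2 ^ (-a - 1)) * ENNReal.ofReal (r ^ (-a) * (Real.log (1 / r)) ^ (-β)) ≤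
    ∫⁻ t in Ici r ∩ Ioo 0 (1 / 2),
      ENNReal.ofReal (t ^ (-a - 1) * (Real.log (1 / t)) ^ (-β)) := by
  calc _ = ∫⁻ t in Ioo r (2 * r),
        ENNReal.ofReal ((2 * r) ^ (-a - 1) * (Real.log (1 / r)) ^ (-β)) := by
        rw [setLIntegral_const, Real.volume_Ioo, ← ENNReal.ofReal_mul (by positivity),
          ← ENNReal.ofReal_mul' (by linarith)]
        congr 1
        rw [Real.mul_rpow (by norm_num) hr.le, Real.rpow_sub_one hr.ne']
        field_simp
        ring
    _ ≤ ∫⁻ t in Ioo r (2 * r), ENNReal.ofReal (t ^ (-a - 1) * (Real.log (1 / t)) ^ (-β)) := by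
        refine setLIntegral_mono' measurableSet_Ioo fun t ht => ENNReal.ofReal_le_ofReal ?_
        obtain ⟨h1, h2⟩ := ht
        have h0 : 0 < t := hr.trans h1
        have hLt : 0 < Real.log (1 / t) := by
          apply Real.log_pos
          rw [lt_div_iff₀ h0]; linarith
        apply mul_le_mul
        · exact Real.rpow_le_rpow_of_nonpos h0 h2.le (by linarith)
        · apply Real.rpow_le_rpow_of_nonpos hLt _ (by linarith)
          apply Real.log_le_log (by positivity)
          exact one_div_le_one_div_of_le hr h1.le
        · apply Real.rpow_nonneg
          apply Real.log_nonneg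
          rw [le_div_iff₀ hr]; linarith
        · positivity
    _ ≤ _ := by
        apply lintegral_mono_set
        rintro t ⟨h1, h2⟩
        exact ⟨h1.le, hr.trans h1, by linarith⟩

lemma outer_upper {a β : ℝ} (ha : 0 < a) (hβ : 1 < β) :
    ∃ C : ℝ, 0 < C ∧ ∀ r : ℝ, 0 < r → r < 1 / 4 →
    ∫⁻ t in Ici r ∩ Ioo 0 (1 / 2),
      ENNReal.ofReal (t ^ (-a - 1) * (Real.log (1 / t)) ^ (-β)) ≤
    ENNReal.ofReal C * ENNReal.ofReal (r ^ (-a) * (Real.log (1 / r)) ^ (-β)) := by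
  have hl2 : 0 < Real.log 2 := Real.log_pos (by norm_num)
  set ε : ℝ := a / (2 * β) with hε
  have hε0 : 0 < ε := by positivity
  set M : ℝ := 1 + 1 / (ε * Real.log 2) with hM
  have hM0 : 0 < M := by positivity
  refine ⟨M ^ β * (2 / a), by positivity, fun r hr hr1 => ?_⟩
  have hLr : 0 < Real.log (1 / r) := by
    apply Real.log_pos
    rw [lt_div_iff₀ hr]; linarith
  have key : ∀ t, r ≤ t → t < 1 / 2 → t ^ (-a - 1) * (Real.log (1 / t)) ^ (-β) ≤
      (M ^ β * r ^ (-(a / 2)) * (Real.log (1 / r)) ^ (-β)) * t ^ (-(a / 2) - 1) := by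
    intro t h1 h2
    have h0 : 0 < t := hr.trans_le h1
    have hLt : Real.log 2 ≤ Real.log (1 / t) := by
      apply Real.log_le_log (by norm_num)
      rw [le_div_iff₀ h0]; linarith
    have hLt0 := hl2.trans_le hLt
    set u := t / r with hu
    have hu1 : 1 ≤ u := by rw [hu, le_div_iff₀ hr]; linarith
    have hlu : 0 ≤ Real.log u := Real.log_nonneg hu1
    have e1 : Real.log (1 / r) = Real.log (1 / t) + Real.log u := by
      rw [hu, Real.log_div h0.ne' hr.ne', one_div, one_div, Real.log_inv, Real.log_inv]; ring
    have e2 : Real.log u ≤ u ^ ε / ε := Real.log_le_rpow_div (by linarith) hε0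
    have e3 : 1 ≤ u ^ ε := Real.one_le_rpow hu1 hε0.le
    have e4 : Real.log (1 / r) ≤ M * u ^ ε * Real.log (1 / t) := by
      have : Real.log u ≤ u ^ ε / (ε * Real.log 2) * Real.log (1 / t) := by
        calc _ ≤ u ^ ε / ε := e2
          _ = u ^ ε / (ε * Real.log 2) * Real.log 2 := by field_simp
          _ ≤ _ := by gcongr
      have h3 : Real.log (1 / t) ≤ u ^ ε * Real.log (1 / t) := le_mul_of_one_le_left hLt0.le e3
      have h4 : M * u ^ ε * Real.log (1 / t) = u ^ ε * Real.log (1 / t) +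
        u ^ ε / (ε * Real.log 2) * Real.log (1 / t) := by rw [hM]; field_simp
      linarith
    have e5 : Real.log (1 / r) ^ β ≤ M ^ β * u ^ (a / 2) * Real.log (1 / t) ^ β := by
      calc _ ≤ (M * u ^ ε * Real.log (1 / t)) ^ β := by gcongr
        _ = _ := by
          rw [Real.mul_rpow (by positivity) hLt0.le, Real.mul_rpow hM0.le (by positivity),
            ← Real.rpow_mul (by linarith)]
          congr 3
          rw [hε]; field_simp
    have e6 : Real.log (1 / t) ^ (-β) ≤ M ^ β * u ^ (a / 2) * Real.log (1 / r) ^ (-β) := by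
      rw [Real.rpow_neg hLt0.le, Real.rpow_neg hLr.le, ← div_eq_mul_inv, le_div_iff₀ (by positivity),
        inv_mul_le_iff₀ (by positivity)]
      linarith
    calc _ ≤ t ^ (-a - 1) * (M ^ β * u ^ (a / 2) * Real.log (1 / r) ^ (-β)) := by gcongr
      _ = _ := by
        rw [hu, Real.div_rpow h0.le hr.le, Real.rpow_neg hr.le,
          show -(a / 2) - 1 = (-a - 1) + a / 2 by ring, Real.rpow_add h0 (-a - 1)]
        field_simp
  calc _ ≤ ∫⁻ t in Ici r, ENNReal.ofReal (M ^ β * r ^ (-(a / 2)) * (Real.log (1 / r)) ^ (-β)) *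
          ENNReal.ofReal (t ^ (-(a / 2) - 1)) := by
        refine (setLIntegral_mono' (measurableSet_Ici.inter measurableSet_Ioo)
          fun t ht => ?_).trans (lintegral_mono_set inter_subset_left)
        rw [← ENNReal.ofReal_mul (by positivity)]
        exact ENNReal.ofReal_le_ofReal (key t ht.1 ht.2.2)
    _ = _ := by
        rw [lintegral_const_mul _ (by fun_prop), setLIntegral_congr Ioi_ae_eq_Ici.symm,
          lintegral_Ioi_rpow' (by positivity) hr, ← ENNReal.ofReal_mul (by positivity),
          ← ENNReal.ofReal_mul (by positivity)]
        congr 1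
        rw [show -a = -(a / 2) + -(a / 2) by ring, Real.rpow_add hr]
        field_simp

theorem stmt14 {n : ℕ} (α q s β : ℝ)
    (hn : 1 ≤ n) (hq : 0 < q) (hq1 : q < 1) (hα : 0 < α) (hαn : 2 * α < n)
    (hβ : 1 < β) (hs : s = (1 - q) * n + 2 * α * q) :
    -- (a)
    ((∫⁻ y in ball (0 : EuclideanSpace ℝ (Fin n)) 1,
        (ENNReal.ofReal (‖y‖ ^ (((n : ℝ) - 2 * α) * q)))⁻¹ ∂(sigmaEx n s β)) < ⊤ ∧
      (∫⁻ y in {y : EuclideanSpace ℝ (Fin n) | 1 ≤ ‖y‖},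
        (ENNReal.ofReal (‖y‖ ^ ((n : ℝ) - 2 * α)))⁻¹ ∂(sigmaEx n s β)) = 0) ∧
    -- (b)
    (∃ c₁ c₂ : ENNReal, 0 < c₁ ∧ c₂ ≠ ⊤ ∧ ∃ δ : ℝ, 0 < δ ∧ δ < 1 / 2 ∧
      ∀ r : ℝ, 0 < r → r < δ →
        (c₁ * ENNReal.ofReal ((Real.log (1 / r)) ^ (1 - β))
            ≤ (∫⁻ y in ball (0 : EuclideanSpace ℝ (Fin n)) r,
                (ENNReal.ofReal (‖y‖ ^ (((n : ℝ) - 2 * α) * q)))⁻¹ ∂(sigmaEx n s β)) ∧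
          (∫⁻ y in ball (0 : EuclideanSpace ℝ (Fin n)) r,
              (ENNReal.ofReal (‖y‖ ^ (((n : ℝ) - 2 * α) * q)))⁻¹ ∂(sigmaEx n s β))
            ≤ c₂ * ENNReal.ofReal ((Real.log (1 / r)) ^ (1 - β))) ∧
        (c₁ * ENNReal.ofReal (r ^ (-((n : ℝ) - 2 * α) * (1 - q)) * (Real.log (1 / r)) ^ (-β))
            ≤ (∫⁻ y in {y : EuclideanSpace ℝ (Fin n) | r ≤ ‖y‖},
                (ENNReal.ofReal (‖y‖ ^ ((n : ℝ) - 2 * α)))⁻¹ ∂(sigmaEx n s β)) ∧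
          (∫⁻ y in {y : EuclideanSpace ℝ (Fin n) | r ≤ ‖y‖},
              (ENNReal.ofReal (‖y‖ ^ ((n : ℝ) - 2 * α)))⁻¹ ∂(sigmaEx n s β))
            ≤ c₂ * ENNReal.ofReal
                (r ^ (-((n : ℝ) - 2 * α) * (1 - q)) * (Real.log (1 / r)) ^ (-β)))) ∧
    -- (c)
    Tendsto (ratioFn α q (sigmaEx n s β)) (nhdsWithin (0:ℝ) (Ioi 0)) (nhds ⊤) := by
  
  have hn0 : Nonempty (Fin n) := ⟨⟨0, hn⟩⟩
  set a : ℝ := ((n : ℝ) - 2 * α) * (1 - q) with ha_def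
  have ha : 0 < a := mul_pos (by linarith) (by linarith)
  have hb : 0 < β - 1 := by linarith
  obtain ⟨k, hk, hK⟩ : ∃ k : ℝ, 0 < k ∧
      (volume : Measure (EuclideanSpace ℝ (Fin n))).toSphere univ = ENNReal.ofReal k := by
    refine ⟨_, ENNReal.toReal_pos ?_ (measure_ne_top _ univ), (ENNReal.ofReal_toReal
      (measure_ne_top _ univ)).symm⟩
    rw [ne_eq, Measure.measure_univ_eq_zero]
    exact Measure.toSphere_ne_zero _
  have hI : ∀ r : ℝ, (∫⁻ y in ball (0 : EuclideanSpace ℝ (Fin n)) r,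
        (ENNReal.ofReal (‖y‖ ^ (((n : ℝ) - 2 * α) * q)))⁻¹ ∂(sigmaEx n s β)) =
      ENNReal.ofReal k * ∫⁻ t in Iio r ∩ Ioo 0 (1 / 2),
        ENNReal.ofReal (t ^ (-1 : ℝ) * (Real.log (1 / t)) ^ (-β)) := by
    intro r
    have h1 : ball (0 : EuclideanSpace ℝ (Fin n)) r = {y | ‖y‖ ∈ Iio r} := by
      ext y; simp
    have h2 : (n : ℝ) - 1 - ((n : ℝ) - 2 * α) * q - s = -1 := by rw [hs]; ring
    rw [h1, sigma_lintegral hn _ _ _ _ measurableSet_Iio, hK, h2]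
  have hO : ∀ r : ℝ, (∫⁻ y in {y : EuclideanSpace ℝ (Fin n) | r ≤ ‖y‖},
        (ENNReal.ofReal (‖y‖ ^ ((n : ℝ) - 2 * α)))⁻¹ ∂(sigmaEx n s β)) =
      ENNReal.ofReal k * ∫⁻ t in Ici r ∩ Ioo 0 (1 / 2),
        ENNReal.ofReal (t ^ (-a - 1) * (Real.log (1 / t)) ^ (-β)) := by
    intro r
    have h2 : (n : ℝ) - 1 - ((n : ℝ) - 2 * α) - s = -a - 1 := by rw [hs, ha_def]; ring
    rw [← hK, ← h2]
    exact sigma_lintegral hn _ _ _ _ measurableSet_Ici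
  have hI' : ∀ r : ℝ, 0 < r → r ≤ 1 / 2 →
      (∫⁻ y in ball (0 : EuclideanSpace ℝ (Fin n)) r,
        (ENNReal.ofReal (‖y‖ ^ (((n : ℝ) - 2 * α) * q)))⁻¹ ∂(sigmaEx n s β)) =
      ENNReal.ofReal k * ENNReal.ofReal ((Real.log (1 / r)) ^ (1 - β) / (β - 1)) := by
    intro r hr hr1
    have h1 : Iio r ∩ Ioo 0 (1 / 2) = Ioo 0 r := by
      ext t; simp only [mem_inter_iff, mem_Iio, mem_Ioo]
      constructor
      · rintro ⟨h1, h2, h3⟩; exact ⟨h2, h1⟩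
      · rintro ⟨h1, h2⟩; exact ⟨h2, h1, by linarith⟩
    rw [hI, h1, inner_int hβ hr hr1]
  obtain ⟨C, hC, hup⟩ := outer_upper ha hβ
  have hexp : -((n : ℝ) - 2 * α) * (1 - q) = -a := by rw [ha_def]; ring
  refine ⟨⟨?_, ?_⟩, ?_, ?_⟩
  · have h1 : Iio (1 : ℝ) ∩ Ioo 0 (1 / 2) = Ioo 0 (1 / 2) := by
      apply inter_eq_right.2
      rintro t ⟨_, h2⟩
      exact h2.trans (by norm_num)
    rw [hI, h1, inner_int hβ (by norm_num) le_rfl]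
    exact ENNReal.mul_lt_top ENNReal.ofReal_lt_top ENNReal.ofReal_lt_top
  · have h1 : Ici (1 : ℝ) ∩ Ioo 0 (1 / 2) = ∅ := by
      ext t; simp only [mem_inter_iff, mem_Ici, mem_Ioo, mem_empty_iff_false, iff_false]
      rintro ⟨h1, _, h3⟩; linarith
    rw [hO, h1]; simp
  · refine ⟨min (ENNReal.ofReal k * ENNReal.ofReal (1 / (β - 1)))
        (ENNReal.ofReal k * ENNReal.ofReal (2 ^ (-a - 1))),
      max (ENNReal.ofReal k * ENNReal.ofReal (1 / (β - 1)))
        (ENNReal.ofReal k * ENNReal.ofReal C), ?_, ?_, 1 / 4, by norm_num, by norm_num, ?_⟩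
    · have h1 : 0 < ENNReal.ofReal k := ENNReal.ofReal_pos.2 hk
      refine lt_min (ENNReal.mul_pos h1.ne' ?_) (ENNReal.mul_pos h1.ne' ?_)
      · exact (ENNReal.ofReal_pos.2 (by positivity)).ne'
      · exact (ENNReal.ofReal_pos.2 (by positivity)).ne'
    · exact (max_lt (ENNReal.mul_lt_top ENNReal.ofReal_lt_top ENNReal.ofReal_lt_top)
        (ENNReal.mul_lt_top ENNReal.ofReal_lt_top ENNReal.ofReal_lt_top)).ne
    · intro r hr hr1
      have h1 : ENNReal.ofReal k * ENNReal.ofReal (1 / (β - 1)) *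
          ENNReal.ofReal ((Real.log (1 / r)) ^ (1 - β)) =
          ENNReal.ofReal k * ENNReal.ofReal ((Real.log (1 / r)) ^ (1 - β) / (β - 1)) := by
        rw [mul_assoc, ← ENNReal.ofReal_mul (by positivity)]
        congr 2; ring
      rw [hI' r hr (by linarith), hO, hexp, ← h1]
      refine ⟨⟨?_, ?_⟩, ?_, ?_⟩
      · gcongr; exact min_le_left _ _
      · gcongr; exact le_max_left _ _
      · calc _ ≤ ENNReal.ofReal k * ENNReal.ofReal (2 ^ (-a - 1)) *
              ENNReal.ofReal (r ^ (-a) * (Real.log (1 / r)) ^ (-β)) := by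
              gcongr; exact min_le_right _ _
          _ ≤ _ := by
              rw [mul_assoc]; gcongr; exact outer_lower ha hβ hr hr1
      · calc _ ≤ ENNReal.ofReal k * ENNReal.ofReal C *
              ENNReal.ofReal (r ^ (-a) * (Real.log (1 / r)) ^ (-β)) := by
              rw [mul_assoc]; gcongr; exact hup r hr hr1
          _ ≤ _ := by
              gcongr; exact le_max_right _ _
  · have hlim : Tendsto (fun r : ℝ => ENNReal.ofReal
        ((1 / (C * (β - 1))) * Real.log (1 / r))) (nhdsWithin (0:ℝ) (Ioi 0)) (nhds ⊤) := by
      refine ENNReal.tendsto_ofReal_atTop.comp (Tendsto.const_mul_atTop (by positivity) ?_)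
      refine Real.tendsto_log_atTop.comp (g := Real.log) (f := fun r : ℝ => 1 / r) ?_
      simp only [one_div]
      exact tendsto_inv_nhdsGT_zero (𝕜 := ℝ)
    refine tendsto_nhds_top_mono hlim ?_
    filter_upwards [Ioo_mem_nhdsGT (show (0 : ℝ) < 1 / 4 by norm_num)] with r hr
    obtain ⟨hr, hr1⟩ := hr
    have hL : 0 < Real.log (1 / r) := by
      apply Real.log_pos
      rw [lt_div_iff₀ hr]; linarith
    unfold ratioFn
    rw [hI' r hr (by linarith), hO]
    calc _ = ENNReal.ofReal k * ENNReal.ofReal ((Real.log (1 / r)) ^ (1 - β) / (β - 1)) /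
          ENNReal.ofReal (r ^ a) / (ENNReal.ofReal k *
            (ENNReal.ofReal C * ENNReal.ofReal (r ^ (-a) * (Real.log (1 / r)) ^ (-β)))) := by
          rw [← ENNReal.ofReal_mul hk.le, ← ENNReal.ofReal_mul hC.le, ← ENNReal.ofReal_mul hk.le,
            ← ENNReal.ofReal_div_of_pos (by positivity),
            ← ENNReal.ofReal_div_of_pos (by positivity)]
          congr 1
          rw [Real.rpow_neg hr.le, Real.rpow_neg hL.le, sub_eq_add_neg 1 β, Real.rpow_add hL,
            Real.rpow_one, Real.rpow_neg hL.le]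
          field_simp
      _ ≤ _ := by
          gcongr
          exact hup r hr hr1
end
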